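/- For every integer n ≥ 2 and every integer k with 1 ≤ k ≤ 2^n, v₂(s(2^n, k+1)) > v₂(s(2^n, k)) - n, where s is the unsigned Stirling number of the first kind (with the convention s(2^n, 2^n + 1) handled as 0, i.e. the inequality is asserted for k ≤ 2^n - 1, and trivially for the boundary cases). -/

import Mathlib

/-! Put `n = m + 1` and `M = 2^m`. The polynomial `x(x+1)⋯(x+2M-1)` is `x` times
`(x+M) ∏_{0<i<M} ((x+M)² - i²)`, because the remaining roots are symmetric about `-M`. Hence
each `s(2^n, k)` is an explicit combination (`sF_eq`) of the elementary symmetric functions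
`e_s` of the squares `1², …, (M-1)²`, with weights a power of `M` times a binomial coefficient.

The valuations `U m s` of the `e_s` are computed exactly by induction on `m`
(`isVal_coeff_sqPoly`). Splitting `i < 2^(m+1)` into even and odd numbers gives
`∏ (1 + i² X) = A(X) B(4X)`, where `B` is the same product over `i < 2^m` and `A` is the product
over odd `i`. The latter is congruent to `(1 + X)^(2^m)` modulo `2^(m+2)` (`oddPoly_congr`), so
its coefficients have the valuations of the binomial coefficients `choose (2^m) s`. In the
convolution of `A` with `B(4X)` one term has strictly smallest valuation.

Since `U m (s + 1) < U m s + 2m` (`U_step`), a single term also dominates in `sF_eq`, so that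
`v₂(s(2^n, 2j+2)) = U m (M-1-j)` and `v₂(s(2^n, 2j+1)) = U m (M-1-j) + m` (`isVal_sF`). For odd
`k` the difference `v₂(s(2^n, k)) - v₂(s(2^n, k+1))` is therefore exactly `n - 1`, and for even
`k` it is less than `n` by `U_step` again.
-/


open Polynomial Finset

/-- Unsigned Stirling number of the first kind: coefficient of `x^k` in
`x(x+1)⋯(x+n-1)`. -/
noncomputable def sF (n k : ℕ) : ℕ :=
  (∏ i ∈ Finset.range n, (X + C i : Polynomial ℕ)).coeff k

/-- The `m`-th Stirling number of the first kind: coefficient of `x^k` in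
`(x+m)(x+m+1)⋯(x+m+n-1)`. -/
noncomputable def sM (m n k : ℕ) : ℕ :=
  (∏ i ∈ Finset.range n, (X + C (m + i) : Polynomial ℕ)).coeff k

/-- `H n k`: the `k`-th elementary symmetric function of `1, 1/2, …, 1/n`. -/
def Hfun (n k : ℕ) : ℚ :=
  ((Finset.Icc 1 n).val.map (fun i => (1 : ℚ) / i)).esymm k

/-! ### Exact 2-adic valuations of integers -/

/-- `IsVal x e`: the integer `x` is nonzero and has 2-adic valuation exactly `e`. -/
def IsVal (x : ℤ) (e : ℕ) : Prop := ∃ u : ℤ, x = 2 ^ e * (2 * u + 1)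

lemma IsVal.mul {x y : ℤ} {a b : ℕ} (hx : IsVal x a) (hy : IsVal y b) :
    IsVal (x * y) (a + b) := by
  obtain ⟨u, rfl⟩ := hx
  obtain ⟨v, rfl⟩ := hy
  exact ⟨2 * u * v + u + v, by ring⟩

lemma IsVal.dvd {x : ℤ} {a b : ℕ} (hx : IsVal x a) (hb : b ≤ a) : (2 : ℤ) ^ b ∣ x := by
  obtain ⟨u, rfl⟩ := hx
  exact (pow_dvd_pow 2 hb).mul_right _

lemma IsVal.add_dvd {x y : ℤ} {a : ℕ} (hx : IsVal x a) (hy : (2 : ℤ) ^ (a + 1) ∣ y) :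
    IsVal (x + y) a := by
  obtain ⟨u, rfl⟩ := hx
  obtain ⟨v, rfl⟩ := hy
  exact ⟨u + v, by ring⟩

lemma isVal_two_pow (a : ℕ) : IsVal (2 ^ a) a := ⟨0, by ring⟩

lemma IsVal.neg_one_pow_mul {x : ℤ} {a : ℕ} (s : ℕ) (hx : IsVal x a) :
    IsVal ((-1) ^ s * x) a := by
  rcases neg_one_pow_eq_or ℤ s with h | h
  · rwa [h, one_mul]
  · obtain ⟨u, rfl⟩ := hx
    exact ⟨-u - 1, by rw [h]; ring⟩

/-- A sum with one term of valuation `e`, all the others having larger valuation, has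
valuation `e`. -/
lemma IsVal.sum {ι : Type*} [DecidableEq ι] {S : Finset ι} {f : ι → ℤ} {a : ι} {e : ℕ}
    (ha : a ∈ S) (hf : IsVal (f a) e) (h : ∀ b ∈ S, b ≠ a → (2 : ℤ) ^ (e + 1) ∣ f b) :
    IsVal (∑ i ∈ S, f i) e := by
  rw [← Finset.add_sum_erase S f ha]
  refine hf.add_dvd (Finset.dvd_sum fun b hb => ?_)
  rw [Finset.mem_erase] at hb
  exact h b hb.2 hb.1

lemma isVal_natCast {a : ℕ} (ha : a ≠ 0) : IsVal a (padicValNat 2 a) := by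
  obtain ⟨k, m, ⟨u, rfl⟩, rfl⟩ := Nat.exists_eq_two_pow_mul_odd ha
  have h : padicValNat 2 (2 * u + 1) = 0 := padicValNat.eq_zero_of_not_dvd (by omega)
  rw [padicValNat.mul (by positivity) (by omega), padicValNat.prime_pow, h]
  exact ⟨u, by push_cast; ring⟩

lemma IsVal.padicValNat_eq {a e : ℕ} (h : IsVal a e) : padicValNat 2 a = e := by
  obtain ⟨u, hu⟩ := h
  have ha : a ≠ 0 := by
    rintro rfl
    have h2 : (2 : ℤ) ^ e ≠ 0 := by positivity
    have := mul_eq_zero.mp hu.symm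
    omega
  apply le_antisymm
  · by_contra! hlt
    have h1 : 2 ^ (e + 1) ∣ a := (padicValNat_dvd_iff_le ha).mpr hlt
    have h2 : (2 : ℤ) ^ (e + 1) ∣ (a : ℤ) := by exact_mod_cast h1
    rw [hu, pow_succ] at h2
    have := (mul_dvd_mul_iff_left (by positivity : (2 : ℤ) ^ e ≠ 0)).mp h2
    omega
  · rw [← padicValNat_dvd_iff_le ha]
    have h2 : (2 : ℤ) ^ e ∣ (a : ℤ) := ⟨_, hu⟩
    exact_mod_cast h2

lemma val_choose_add_val {m i : ℕ} (hi : 1 ≤ i) (him : i ≤ 2 ^ m) :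
    padicValNat 2 ((2 ^ m).choose i) + padicValNat 2 i = m := by
  have h := Nat.Prime.emultiplicity_choose_prime_pow_add_emultiplicity Nat.prime_two him
    (by omega)
  rw [← padicValNat_eq_emultiplicity (Nat.choose_pos him).ne',
    ← padicValNat_eq_emultiplicity (by omega)] at h
  exact_mod_cast h

lemma val_choose_le {m i : ℕ} (him : i ≤ 2 ^ m) : padicValNat 2 ((2 ^ m).choose i) ≤ m := by
  rcases Nat.eq_zero_or_pos i with rfl | hi
  · simp
  · have := val_choose_add_val hi him
    omega

lemma val_le_self {i : ℕ} (hi : 1 ≤ i) : padicValNat 2 i + 1 ≤ i := by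
  have h1 := Nat.le_of_dvd hi (pow_padicValNat_dvd (p := 2) (n := i))
  have h2 := Nat.lt_two_pow_self (n := padicValNat 2 i)
  omega

lemma val_le_of_le_two_pow {i m : ℕ} (hi : 1 ≤ i) (h : i ≤ 2 ^ m) : padicValNat 2 i ≤ m := by
  have := val_choose_add_val hi h
  omega

/-! ### The valuation function of the elementary symmetric functions of squares -/

/-- The 2-adic valuation of the `s`-th elementary symmetric function of `1², …, (2^m - 1)²`
for `s < 2^m` (see `isVal_coeff_sqPoly`). -/
def U : ℕ → ℕ → ℕ
  | 0, _ => 0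
  | m + 1, s => if s < 2 ^ m then padicValNat 2 ((2 ^ m).choose s)
      else U m (s - 2 ^ m) + 2 * (s - 2 ^ m)

lemma U_lt {m s : ℕ} (h : s < 2 ^ m) : U (m + 1) s = padicValNat 2 ((2 ^ m).choose s) := by
  simp [U, h]

lemma U_add (m t : ℕ) : U (m + 1) (2 ^ m + t) = U m t + 2 * t := by
  simp [U]

lemma U_zero (m : ℕ) : U m 0 = 0 := by
  cases m <;> simp [U]

/-- Bound making the leading pair dominate in the convolution for indices `≥ 2^m`. -/
lemma U_conv (m : ℕ) : ∀ j i, 1 ≤ i → j + i < 2 ^ m →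
    U m j + padicValNat 2 i + 1 ≤ U m (j + i) + 2 * i + m := by
  induction m with
  | zero => intro j i hi h; simp at h; omega
  | succ m ih =>
    intro j i hi h
    rcases lt_or_ge j (2 ^ m) with hj | hj
    · rw [U_lt hj]
      have := val_choose_le hj.le
      have := val_le_self hi
      omega
    · obtain ⟨t, rfl⟩ := Nat.exists_eq_add_of_le hj
      rw [add_assoc (2 ^ m) t i, U_add, U_add]
      have := ih t i hi (by rw [pow_succ] at h; omega)
      omega

/-- Consecutive valuations increase by less than `2m`, the valuation of `(2^m)²`. -/
lemma U_step (m : ℕ) : ∀ s, s + 1 < 2 ^ m → U m (s + 1) + 1 ≤ U m s + 2 * m := by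
  induction m with
  | zero => intro s h; simp at h
  | succ m ih =>
    intro s h
    rcases lt_trichotomy (s + 1) (2 ^ m) with hs | hs | hs
    · rw [U_lt hs]
      have := val_choose_le hs.le
      omega
    · have := U_add m 0
      rw [U_zero, add_zero] at this
      rw [hs, this]
      omega
    · obtain ⟨t, rfl⟩ := Nat.exists_eq_add_of_le (Nat.lt_succ_iff.mp hs)
      rw [add_assoc (2 ^ m) t 1, U_add, U_add]
      have := ih t (by rw [pow_succ] at h; omega)
      omega

lemma U_step_add (m s i : ℕ) (hi : 1 ≤ i) (h : s + i < 2 ^ m) :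
    U m (s + i) + 1 ≤ U m s + 2 * m * i := by
  induction i, hi using Nat.le_induction with
  | base => simpa using U_step m s h
  | succ i hi ih =>
    have h1 := ih (by omega)
    have h2 := U_step m (s + i) (by omega)
    rw [mul_add, ← add_assoc s]
    omega

/-- Bound making the leading pair dominate in the convolution for indices `< 2^m`. -/
lemma U_lower {m t : ℕ} (ht : 1 ≤ t) (h : t < 2 ^ m) :
    m + 1 ≤ padicValNat 2 t + U m t + 2 * t := by
  cases m with
  | zero => simp at h; omega
  | succ m =>
    rcases lt_or_ge t (2 ^ m) with hj | hj
    · rw [U_lt hj]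
      have := val_choose_add_val ht hj.le
      omega
    · have := Nat.lt_two_pow_self (n := m)
      omega

/-! ### The generating polynomials of the squares and of the odd squares -/

/-- `∏ (1 + i² X)` over `i < 2^m`; its coefficients are the elementary symmetric functions of
`1², …, (2^m - 1)²`. -/
noncomputable def sqPoly (m : ℕ) : ℤ[X] := ∏ i ∈ Finset.range (2 ^ m), (1 + C ((i : ℤ) ^ 2) * X)

/-- `∏ (1 + i² X)` over the odd `i < 2^(m+1)`. -/
noncomputable def oddPoly (m : ℕ) : ℤ[X] :=
  ∏ i ∈ Finset.range (2 ^ m), (1 + C ((2 * (i : ℤ) + 1) ^ 2) * X)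

lemma dvd_prod_sub_prod (d : ℤ[X]) (f g : ℕ → ℤ[X]) (n : ℕ) (h : ∀ i < n, d ∣ f i - g i) :
    d ∣ ∏ i ∈ Finset.range n, f i - ∏ i ∈ Finset.range n, g i := by
  induction n with
  | zero => simp
  | succ n ih =>
    rw [Finset.prod_range_succ, Finset.prod_range_succ]
    rw [show ∀ a b c e : ℤ[X], a * b - c * e = a * (b - e) + (a - c) * e by intros; ring]
    exact dvd_add ((h n (by omega)).mul_left _) ((ih fun i hi => h i (by omega)).mul_right _)

lemma prod_range_two_mul' {R : Type*} [CommMonoid R] (f : ℕ → R) (n : ℕ) :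
    ∏ i ∈ Finset.range (2 * n), f i =
      (∏ i ∈ Finset.range n, f (2 * i)) * ∏ i ∈ Finset.range n, f (2 * i + 1) := by
  induction n with
  | zero => simp
  | succ n ih =>
    rw [mul_add, mul_one, Finset.prod_range_succ, Finset.prod_range_succ, ih,
      Finset.prod_range_succ, Finset.prod_range_succ]
    simp only [mul_assoc, mul_left_comm]

lemma sqPoly_succ (m : ℕ) : sqPoly (m + 1) = oddPoly m * (sqPoly m).comp (C 4 * X) := by
  rw [sqPoly, pow_succ', prod_range_two_mul', mul_comm, oddPoly, sqPoly, Polynomial.prod_comp]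
  congr 1
  refine Finset.prod_congr rfl fun i _ => ?_
  simp only [add_comp, mul_comp, one_comp, C_comp, X_comp, ← mul_assoc, ← C_mul]
  push_cast
  ring_nf

/-- Modulo `2^(m+2)` the polynomial `oddPoly m` is `(1 + X)^(2^m)`. Passing from `m` to `m + 1`
adds the factors of the odd numbers `2^(m+2) - i`, whose squares are `i²` modulo `2^(m+3)`; so
`oddPoly (m+1) ≡ (oddPoly m)²`, and squaring gains one power of `2`. -/
lemma oddPoly_congr (m : ℕ) : C ((2 : ℤ) ^ (m + 2)) ∣ oddPoly m - (1 + X) ^ (2 ^ m) := by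
  induction m with
  | zero => simp [oddPoly]
  | succ m ih =>
    have h1 : C ((2 : ℤ) ^ (m + 3)) ∣ oddPoly (m + 1) - oddPoly m ^ 2 := by
      have h2 : oddPoly (m + 1) = oddPoly m * ∏ i ∈ Finset.range (2 ^ m),
          (1 + C ((2 * ((2 ^ m + (2 ^ m - 1 - i) : ℕ) : ℤ) + 1) ^ 2) * X) := by
        rw [oddPoly, pow_succ, mul_two, Finset.prod_range_add, oddPoly,
          Finset.prod_range_reflect
            (fun i => (1 + C ((2 * ((2 ^ m + i : ℕ) : ℤ) + 1) ^ 2) * X))]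
      rw [h2, sq, ← mul_sub]
      apply Dvd.dvd.mul_left
      apply dvd_prod_sub_prod
      intro i hi
      refine ⟨C (2 ^ (m + 1) - (2 * (i : ℤ) + 1)) * X, ?_⟩
      rw [← mul_assoc, ← C_mul, add_sub_add_left_eq_sub, ← sub_mul, ← C_sub]
      congr 2
      have h3 : ((2 ^ m + (2 ^ m - 1 - i) : ℕ) : ℤ) = 2 * 2 ^ m - 1 - i := by
        rw [Nat.sub_sub, Nat.cast_add, Nat.cast_sub (by omega)]
        push_cast
        ring
      rw [h3]
      ring
    obtain ⟨H, hH⟩ := ih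
    have h4 : C ((2 : ℤ) ^ (m + 3)) ∣ oddPoly m ^ 2 - (1 + X) ^ (2 ^ (m + 1)) := by
      refine ⟨(1 + X) ^ (2 ^ m) * H + C (2 ^ (m + 1)) * H ^ 2, ?_⟩
      rw [eq_add_of_sub_eq hH]
      simp only [map_pow, pow_succ 2 m, pow_mul]
      have : (C 2 : ℤ[X]) = 2 := rfl
      rw [this]
      ring
    have := dvd_add h1 h4
    rwa [sub_add_sub_cancel] at this

lemma natDegree_prod_one_add_le (a : ℕ → ℤ) (n : ℕ) :
    (∏ i ∈ Finset.range n, (1 + C (a i) * X)).natDegree ≤ n := by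
  refine (natDegree_prod_le _ _).trans ((Finset.sum_le_card_nsmul _ _ 1 fun i _ => ?_).trans
    (by simp))
  compute_degree

lemma coeff_oddPoly_of_lt {m s : ℕ} (h : 2 ^ m < s) : (oddPoly m).coeff s = 0 :=
  coeff_eq_zero_of_natDegree_lt ((natDegree_prod_one_add_le _ _).trans_lt h)

/-- Dropping the trivial factor for `i = 0`. -/
lemma sqPoly_eq (m : ℕ) :
    sqPoly m = ∏ i ∈ Finset.range (2 ^ m - 1), (1 + C (((i : ℤ) + 1) ^ 2) * X) := by
  have h : 2 ^ m = 2 ^ m - 1 + 1 := by have := Nat.two_pow_pos m; omega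
  rw [sqPoly, h, Finset.prod_range_succ']
  simp

lemma coeff_sqPoly_of_le {m s : ℕ} (h : 2 ^ m ≤ s) : (sqPoly m).coeff s = 0 := by
  rw [sqPoly_eq]
  apply coeff_eq_zero_of_natDegree_lt
  have := natDegree_prod_one_add_le (fun i => ((i : ℤ) + 1) ^ 2) (2 ^ m - 1)
  have := Nat.two_pow_pos m
  omega

lemma isVal_coeff_oddPoly {m s : ℕ} (h : s ≤ 2 ^ m) :
    IsVal ((oddPoly m).coeff s) (padicValNat 2 ((2 ^ m).choose s)) := by
  obtain ⟨H, hH⟩ := oddPoly_congr m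
  rw [eq_add_of_sub_eq' hH, coeff_add, coeff_one_add_X_pow, coeff_C_mul]
  refine (isVal_natCast (Nat.choose_pos h).ne').add_dvd (Dvd.dvd.mul_right (pow_dvd_pow 2 ?_) _)
  have := val_choose_le h
  omega

/-- The ultrametric inequality, when `r + t` has smaller valuation than `t`. -/
lemma min_val_le {t r : ℕ} (hr : 1 ≤ r) (h : padicValNat 2 (r + t) < padicValNat 2 t) :
    padicValNat 2 r ≤ padicValNat 2 (r + t) := by
  by_contra! h2
  have h3 : 2 ^ (padicValNat 2 (r + t) + 1) ∣ r + t :=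
    dvd_add ((pow_dvd_pow 2 h2).trans pow_padicValNat_dvd)
      ((pow_dvd_pow 2 h).trans pow_padicValNat_dvd)
  rw [padicValNat_dvd_iff_le (by omega)] at h3
  omega

/-- Exact valuations, from `sqPoly_succ`. In the convolution for the coefficient of `X^s`, the
dominant pair of indices is `(s, 0)` if `s < 2^m` and `(2^m, s - 2^m)` otherwise. -/
lemma isVal_coeff_sqPoly (m : ℕ) : ∀ s < 2 ^ m, IsVal ((sqPoly m).coeff s) (U m s) := by
  induction m with
  | zero =>
    intro s hs
    obtain rfl : s = 0 := by simpa using hs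
    exact ⟨0, by simp [sqPoly, U]⟩
  | succ m ih =>
    intro s hs
    have hfour : ∀ t < 2 ^ m, IsVal ((sqPoly m).coeff t * 4 ^ t) (U m t + 2 * t) := by
      intro t ht
      have := (ih t ht).mul (isVal_two_pow (2 * t))
      rwa [pow_mul] at this
    rw [sqPoly_succ, coeff_mul]
    simp only [comp_C_mul_X_coeff]
    rcases lt_or_ge s (2 ^ m) with h | h
    · refine IsVal.sum (a := (s, 0)) (by simp) ?_ ?_
      · rw [U_lt h]
        have := (isVal_coeff_oddPoly h.le).mul (hfour 0 (by positivity))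
        rwa [U_zero] at this
      · rintro ⟨r, t⟩ hrt hne
        rw [Finset.HasAntidiagonal.mem_antidiagonal] at hrt
        dsimp only at hrt ⊢
        subst hrt
        have ht : 1 ≤ t := by
          by_contra! h0
          obtain rfl : t = 0 := by omega
          exact hne rfl
        refine ((isVal_coeff_oddPoly (by omega)).mul (hfour t (by omega))).dvd ?_
        rw [U_lt h]
        have h1 := val_choose_add_val (m := m) (i := r + t) (by omega) h.le
        have h2 := U_lower ht (m := m) (by omega)
        rcases Nat.eq_zero_or_pos r with rfl | hr
        · simp only [zero_add] at h1 ⊢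
          omega
        · have h3 := val_choose_add_val (m := m) hr (by omega)
          have h4 := val_le_of_le_two_pow (m := m) ht (by omega)
          rcases le_or_gt (padicValNat 2 t) (padicValNat 2 (r + t)) with h5 | h5
          · omega
          · have := min_val_le hr h5
            omega
    · obtain ⟨t₀, rfl⟩ := Nat.exists_eq_add_of_le h
      have ht₀ : t₀ < 2 ^ m := by rw [pow_succ] at hs; omega
      rw [U_add]
      refine IsVal.sum (a := (2 ^ m, t₀)) (by simp) ?_ ?_
      · have := (isVal_coeff_oddPoly (m := m) le_rfl).mul (hfour t₀ ht₀)
        simpa using this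
      · rintro ⟨i, t⟩ hit hne
        rw [Finset.HasAntidiagonal.mem_antidiagonal] at hit
        dsimp only at hit ⊢
        rcases lt_or_ge (2 ^ m) i with hi | hi
        · simp [coeff_oddPoly_of_lt hi]
        rcases lt_or_ge t (2 ^ m) with ht | ht
        swap
        · simp [coeff_sqPoly_of_le ht]
        obtain ⟨r, hr⟩ := Nat.exists_eq_add_of_le hi
        have hr1 : 1 ≤ r := by
          by_contra! h0
          apply hne
          ext <;> dsimp only <;> omega
        obtain rfl : t = t₀ + r := by omega
        refine ((isVal_coeff_oddPoly hi).mul (hfour _ ht)).dvd ?_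
        have h1 := val_choose_add_val (m := m) (i := r) hr1 (by omega)
        have h2 : (2 ^ m).choose i = (2 ^ m).choose r :=
          Nat.choose_symm_of_eq_add hr
        have h3 := U_conv m t₀ r hr1 ht
        rw [h2]
        omega

/-! ### Stirling numbers in terms of symmetric functions of squares -/

/-- Vieta's formula for `∏ (Z - aᵢ)`, the elementary symmetric functions being given as the
coefficients of `∏ (1 + aᵢ X)`. -/
lemma prod_sub_eq_sum {R : Type*} [CommRing R] (a : ℕ → ℤ) (Z : R) (n : ℕ) :
    ∏ i ∈ Finset.range n, (Z - (a i : R)) = ∑ s ∈ Finset.range (n + 1),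
      (((-1) ^ s * (∏ i ∈ Finset.range n, (1 + C (a i) * X)).coeff s : ℤ) : R) *
        Z ^ (n - s) := by
  induction n with
  | zero => simp
  | succ n ih =>
    set p := ∏ i ∈ Finset.range n, (1 + C (a i) * X) with hp
    have hdeg : p.coeff (n + 1) = 0 :=
      coeff_eq_zero_of_natDegree_lt (Nat.lt_succ_iff.mpr (natDegree_prod_one_add_le _ _))
    have hc : ∀ s, (p * (1 + C (a n) * X)).coeff (s + 1) =
        p.coeff (s + 1) + a n * p.coeff s := by
      intro s
      rw [mul_add, mul_one, coeff_add, ← mul_assoc, coeff_mul_X, coeff_mul_C, mul_comm]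
    have h0 : (p * (1 + C (a n) * X)).coeff 0 = p.coeff 0 := by simp [mul_coeff_zero]
    have hZ : ∑ s ∈ Finset.range (n + 2), (((-1) ^ s * p.coeff s : ℤ) : R) * Z ^ (n + 1 - s) =
        Z * ∑ s ∈ Finset.range (n + 1), (((-1) ^ s * p.coeff s : ℤ) : R) * Z ^ (n - s) := by
      rw [Finset.sum_range_succ, hdeg, Finset.mul_sum]
      simp only [mul_zero, Int.cast_zero, zero_mul, add_zero]
      refine Finset.sum_congr rfl fun s hs => ?_
      rw [Finset.mem_range] at hs
      rw [show n + 1 - s = n - s + 1 by omega, pow_succ]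
      ring
    rw [Finset.prod_range_succ, Finset.prod_range_succ, ← hp, ih, mul_sub, mul_comm _ Z, ← hZ,
      Finset.sum_range_succ', Finset.sum_range_succ' _ (n + 1), h0, add_sub_right_comm]
    congr 1
    rw [Finset.sum_mul, ← Finset.sum_sub_distrib]
    refine Finset.sum_congr rfl fun s hs => ?_
    rw [hc, show n + 1 - (s + 1) = n - s by omega]
    push_cast
    ring

/-- A product of `2d + 1` consecutive factors, paired symmetrically about the middle one. -/
lemma prod_symm {R : Type*} [CommRing R] (Y : R) (d : ℕ) :
    ∏ i ∈ Finset.range (2 * d + 1), (Y - d + i) =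
      Y * ∏ i ∈ Finset.range d, (Y ^ 2 - ((i : R) + 1) ^ 2) := by
  induction d with
  | zero => simp
  | succ d ih =>
    rw [show 2 * (d + 1) + 1 = 2 * d + 1 + 1 + 1 by ring, Finset.prod_range_succ,
      Finset.prod_range_succ', Finset.prod_range_succ _ d, ← mul_assoc, ← ih]
    have : ∀ i : ℕ, Y - ((d + 1 : ℕ) : R) + ((i + 1 : ℕ) : R) = Y - d + i := by
      intro i; push_cast; ring
    simp only [this]
    push_cast
    ring

/-- Here `prod_symm` is used at `Y = X + 2^m`, `d = 2^m - 1`, and the factor `X` of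
`X(X+1)⋯(X+2^(m+1)-1)` accounts for the index shift `r + 1`. -/
lemma sF_eq (m r : ℕ) : (sF (2 ^ (m + 1)) (r + 1) : ℤ) = ∑ s ∈ Finset.range (2 ^ m),
    (-1) ^ s * (sqPoly m).coeff s *
      ((2 ^ m) ^ (2 * (2 ^ m - 1 - s) + 1 - r) * ((2 * (2 ^ m - 1 - s) + 1).choose r : ℤ)) := by
  obtain ⟨d, hd⟩ : ∃ d, 2 ^ m = d + 1 := ⟨2 ^ m - 1, by have := Nat.two_pow_pos m; omega⟩
  have hdZ : (2 : ℤ) ^ m = d + 1 := by exact_mod_cast hd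
  have h1 : (sF (2 ^ (m + 1)) (r + 1) : ℤ) =
      (∏ i ∈ Finset.range (2 ^ (m + 1)), (X + C (i : ℤ))).coeff (r + 1) := by
    have h : (∏ i ∈ Finset.range (2 ^ (m + 1)), (X + C (i : ℤ))) =
        (∏ i ∈ Finset.range (2 ^ (m + 1)), (X + C i : ℕ[X])).map (Nat.castRingHom ℤ) := by
      rw [Polynomial.map_prod]
      simp
    rw [h, coeff_map, sF]
    simp
  have h2 : ∏ i ∈ Finset.range (2 ^ (m + 1)), (X + C (i : ℤ)) =
      (∑ s ∈ Finset.range (d + 1), C ((-1) ^ s * (sqPoly m).coeff s) *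
        (X + C ((2 : ℤ) ^ m)) ^ (2 * (d - s) + 1)) * X := by
    rw [show 2 ^ (m + 1) = 2 * d + 1 + 1 by rw [pow_succ]; omega, Finset.prod_range_succ']
    have h3 := prod_symm (X + C ((2 : ℤ) ^ m)) d
    have h4 := prod_sub_eq_sum (fun i => ((i : ℤ) + 1) ^ 2) ((X + C ((2 : ℤ) ^ m)) ^ 2) d
    rw [sqPoly_eq, hd, Nat.add_sub_cancel]
    push_cast at h4
    rw [h4, Finset.mul_sum] at h3
    congr 1
    · convert h3 using 1
      · refine Finset.prod_congr rfl fun i _ => ?_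
        rw [hdZ]
        simp
        ring
      · refine Finset.sum_congr rfl fun s _ => ?_
        rw [pow_succ, pow_mul]
        simp
        ring
    · simp
  rw [h1, h2, coeff_mul_X, finsetSum_coeff, hd, Nat.add_sub_cancel]
  refine Finset.sum_congr rfl fun s _ => ?_
  rw [coeff_C_mul, coeff_X_add_C_pow, hdZ]

/-- The valuation of `s(2^(m+1), 2j+2)` (for `ε = 0`) and of `s(2^(m+1), 2j+1)` (for `ε = 1`):
the term `s = 2^m - 1 - j` dominates in `sF_eq`. -/
lemma isVal_sF {m j ε r : ℕ} (hj : j < 2 ^ m) (hε : ε ≤ 1) (hr : r + ε = 2 * j + 1) :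
    IsVal (sF (2 ^ (m + 1)) (r + 1)) (U m (2 ^ m - 1 - j) + m * ε) := by
  rw [sF_eq]
  refine IsVal.sum (a := 2 ^ m - 1 - j) (by rw [Finset.mem_range]; omega) ?_ ?_
  · have h1 : 2 ^ m - 1 - (2 ^ m - 1 - j) = j := by omega
    rw [h1, show 2 * j + 1 - r = ε by omega, ← pow_mul]
    have h2 : IsVal ((2 * j + 1).choose r : ℤ) 0 := by
      interval_cases ε
      · obtain rfl : r = 2 * j + 1 := by omega
        exact ⟨0, by simp⟩
      · obtain rfl : r = 2 * j := by omega
        exact ⟨j, by simp⟩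
    have h3 := (isVal_coeff_sqPoly m (2 ^ m - 1 - j) (by omega)).neg_one_pow_mul (2 ^ m - 1 - j)
    have := h3.mul ((isVal_two_pow (m * ε)).mul h2)
    simpa using this
  · intro s hs hne
    rw [Finset.mem_range] at hs
    rcases lt_or_ge (2 ^ m - 1 - j) s with hlt | hge
    -- If `2(2^m - 1 - s) + 1 < r`, the binomial coefficient vanishes.
    · rw [Nat.choose_eq_zero_of_lt (by omega)]
      simp
    · obtain ⟨i, hi⟩ := Nat.exists_eq_add_of_le hge
      have hi1 : 1 ≤ i := by omega
      have h1 := U_step_add m s i hi1 (by omega)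
      rw [← hi] at h1
      rw [show 2 * (2 ^ m - 1 - s) + 1 - r = 2 * i + ε by omega, ← pow_mul, ← mul_assoc]
      apply Dvd.dvd.mul_right
      refine (((isVal_coeff_sqPoly m s hs).neg_one_pow_mul s).mul (isVal_two_pow _)).dvd ?_
      rw [mul_add, ← mul_assoc, mul_comm m 2]
      omega

theorem stmt12 (n k : ℕ) (hn : 2 ≤ n) (hk : 1 ≤ k) (hk' : k ≤ 2 ^ n - 1) :
    (padicValNat 2 (sF (2 ^ n) (k + 1)) : ℤ) > (padicValNat 2 (sF (2 ^ n) k) : ℤ) - n := by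
  obtain ⟨m, rfl⟩ : ∃ m, n = m + 1 := ⟨n - 1, by omega⟩
  rw [pow_succ] at hk'
  rcases Nat.even_or_odd' k with ⟨j, rfl | rfl⟩
  -- For even `k` write `k = 2j + 2`.
  · obtain ⟨j, rfl⟩ : ∃ i, j = i + 1 := ⟨j - 1, by omega⟩
    have h1 := (isVal_sF (m := m) (j := j) (ε := 0) (r := 2 * j + 1)
      (by omega) (by omega) rfl).padicValNat_eq
    have h2 := (isVal_sF (m := m) (j := j + 1) (ε := 1) (r := 2 * (j + 1))
      (by omega) (by omega) rfl).padicValNat_eq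
    have h3 := U_step m (2 ^ m - 1 - (j + 1)) (by omega)
    rw [show 2 ^ m - 1 - (j + 1) + 1 = 2 ^ m - 1 - j by omega] at h3
    rw [h2, show 2 * (j + 1) = 2 * j + 1 + 1 by ring, h1]
    push_cast
    omega
  · have h1 := (isVal_sF (m := m) (j := j) (ε := 0) (r := 2 * j + 1)
      (by omega) (by omega) rfl).padicValNat_eq
    have h2 := (isVal_sF (m := m) (j := j) (ε := 1) (r := 2 * j)
      (by omega) (by omega) rfl).padicValNat_eq
    rw [h1, h2]
    push_cast
    omega
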